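/- arXiv:1107.1172 — 6 statements merged into one kernel-verified Lean document; each statement's English description precedes it below -/
import Mathlib

section
/- Let k : [0,∞) → (0,∞) be continuous, nondecreasing, with k(r) → +∞ as r → +∞, and let g ∈ C²([0,∞)) be the solution of the initial value problem g''(r) = k(r)² g(r), g(0) = 0, g'(0) = 1. Then g(r) > 0 for all r > 0, and there exists r₀ > 0 such that g'(r) ≤ k(r) g(r) for all r ≥ r₀. -/
open Set Filter

/-!
Energy argument. The product `g g'` has derivative `g'² + k² g² ≥ 0` and vanishes at `0`, so it is
nonnegative; hence `(g'²)' = 2 k² g g' ≥ 0` and `g'² ≥ 1`. As `g'` is continuous with `g'(0) = 1`,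
it stays positive, and so `g > 0` on `(0,∞)`.

For the comparison, fix `R ≥ 1`. On `[1,R]` the energy `g'² - k(R)² g²` has derivative
`2 g g' (k² - k(R)²) ≤ 0`, because `k` is nondecreasing. Its value at `1` is nonpositive as soon as
`k(R) g(1) ≥ g'(1)`, which holds for all large `R` because `k → ∞`. Then its value at `R` is
nonpositive too, that is, `g'(R) ≤ k(R) g(R)`.
-/

/-- Let `k : [0,∞) → (0,∞)` be continuous, nondecreasing, with
`k(r) → +∞` as `r → +∞`, and let `g ∈ C²([0,∞))` solve `g'' = k² g`, `g(0)=0`,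
`g'(0)=1`.  Then `g > 0` on `(0,∞)` and there exists `r₀ > 0` such that
`g'(r) ≤ k(r) g(r)` for all `r ≥ r₀`. -/
theorem stmt1
    (k : ℝ → ℝ)
    (hk_cont : ContinuousOn k (Set.Ici 0))
    (hk_pos : ∀ r : ℝ, 0 ≤ r → 0 < k r)
    (hk_mono : MonotoneOn k (Set.Ici 0))
    (hk_infty : Filter.Tendsto k Filter.atTop Filter.atTop)
    (g g' g'' : ℝ → ℝ)
    (hg_deriv : ∀ r : ℝ, 0 ≤ r → HasDerivWithinAt g (g' r) (Set.Ici 0) r)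
    (hg'_deriv : ∀ r : ℝ, 0 ≤ r → HasDerivWithinAt g' (g'' r) (Set.Ici 0) r)
    (hg''_cont : ContinuousOn g'' (Set.Ici 0))
    (hODE : ∀ r : ℝ, 0 ≤ r → g'' r = (k r) ^ 2 * g r)
    (hg0 : g 0 = 0) (hg'0 : g' 0 = 1) :
    (∀ r : ℝ, 0 < r → 0 < g r) ∧
    ∃ r₀ : ℝ, 0 < r₀ ∧ ∀ r : ℝ, r₀ ≤ r → g' r ≤ k r * g r := by
  have hgc : ContinuousOn g (Ici 0) := fun r hr => (hg_deriv r hr).continuousWithinAt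
  have hg'c : ContinuousOn g' (Ici 0) := fun r hr => (hg'_deriv r hr).continuousWithinAt
  have hd : ∀ r : ℝ, 0 < r → HasDerivAt g (g' r) r := fun r hr =>
    (hg_deriv r hr.le).hasDerivAt (Ici_mem_nhds hr)
  have hd' : ∀ r : ℝ, 0 < r → HasDerivAt g' (k r ^ 2 * g r) r := fun r hr =>
    hODE r hr.le ▸ (hg'_deriv r hr.le).hasDerivAt (Ici_mem_nhds hr)
  have hprod : ∀ r : ℝ, 0 ≤ r → 0 ≤ g r * g' r := by
    have hm : MonotoneOn (fun r => g r * g' r) (Ici 0) := by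
      refine monotoneOn_of_hasDerivWithinAt_nonneg (convex_Ici 0) (hgc.mul hg'c)
        (f' := fun r => g' r * g' r + g r * (k r ^ 2 * g r)) ?_ ?_
      · intro r hr
        rw [interior_Ici] at hr
        exact ((hd r hr).mul (hd' r hr)).hasDerivWithinAt
      · intro r _
        nlinarith [mul_self_nonneg (g' r), sq_nonneg (k r * g r)]
    intro r hr
    have := hm (mem_Ici.2 le_rfl) (mem_Ici.2 hr) hr
    simpa [hg0] using this
  have hsq : ∀ r : ℝ, 0 ≤ r → 1 ≤ g' r * g' r := by
    have hm : MonotoneOn (fun r => g' r * g' r) (Ici 0) := by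
      refine monotoneOn_of_hasDerivWithinAt_nonneg (convex_Ici 0) (hg'c.mul hg'c)
        (f' := fun r => k r ^ 2 * g r * g' r + g' r * (k r ^ 2 * g r)) ?_ ?_
      · intro r hr
        rw [interior_Ici] at hr
        exact ((hd' r hr).mul (hd' r hr)).hasDerivWithinAt
      · intro r hr
        rw [interior_Ici] at hr
        nlinarith [mul_nonneg (sq_nonneg (k r)) (hprod r (le_of_lt hr))]
    intro r hr
    have := hm (mem_Ici.2 le_rfl) (mem_Ici.2 hr) hr
    simpa [hg'0] using this
  have hg'pos : ∀ r : ℝ, 0 ≤ r → 0 < g' r := by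
    intro r hr
    by_contra! hneg
    obtain ⟨c, hc, hc0⟩ := intermediate_value_Icc' hr
      (hg'c.mono Icc_subset_Ici_self) (show (0 : ℝ) ∈ Icc (g' r) (g' 0) by simp [hg'0, hneg])
    have := hsq c hc.1
    rw [hc0] at this
    norm_num at this
  have hpos : ∀ r : ℝ, 0 < r → 0 < g r := by
    have hm : StrictMonoOn g (Ici 0) := by
      refine strictMonoOn_of_hasDerivWithinAt_pos (convex_Ici 0) hgc (f' := g') ?_ ?_
      · intro r hr
        rw [interior_Ici] at hr
        exact (hd r hr).hasDerivWithinAt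
      · intro r hr
        exact hg'pos r (interior_subset hr)
    intro r hr
    simpa [hg0] using hm (mem_Ici.2 le_rfl) (mem_Ici.2 hr.le) hr
  refine ⟨hpos, ?_⟩
  obtain ⟨R₀, hR₀⟩ := eventually_atTop.1 (hk_infty.eventually_ge_atTop (g' 1 / g 1))
  refine ⟨max 1 R₀, by positivity, fun R hR => ?_⟩
  have h1R : 1 ≤ R := (le_max_left _ _).trans hR
  have hkR : g' 1 ≤ k R * g 1 :=
    (div_le_iff₀ (hpos 1 one_pos)).1 (hR₀ R ((le_max_right _ _).trans hR))
  have hsub : Icc 1 R ⊆ Ici (0 : ℝ) := fun t ht => zero_le_one.trans ht.1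
  have hanti : AntitoneOn (fun t => g' t * g' t - k R ^ 2 * (g t * g t)) (Icc 1 R) := by
    refine antitoneOn_of_hasDerivWithinAt_nonpos (convex_Icc 1 R)
      (((hg'c.mul hg'c).sub (continuousOn_const.mul (hgc.mul hgc))).mono hsub)
      (f' := fun t => k t ^ 2 * g t * g' t + g' t * (k t ^ 2 * g t)
        - k R ^ 2 * (g' t * g t + g t * g' t)) ?_ ?_
    · intro t ht
      have ht0 : 0 < t := one_pos.trans_le (interior_subset ht).1
      exact (((hd' t ht0).mul (hd' t ht0)).sub
        (((hd t ht0).mul (hd t ht0)).const_mul (k R ^ 2))).hasDerivWithinAt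
    · intro t ht
      have ht' := interior_subset ht
      have ht0 : 0 ≤ t := hsub ht'
      have hk2 : k t ^ 2 ≤ k R ^ 2 :=
        pow_le_pow_left₀ (hk_pos t ht0).le
          (hk_mono ht0 (ht0.trans ht'.2) ht'.2) 2
      nlinarith [mul_nonneg (sub_nonneg.2 hk2) (hprod t ht0)]
  have hE := hanti (left_mem_Icc.2 h1R) (right_mem_Icc.2 h1R) h1R
  have h0R : 0 < R := one_pos.trans_le h1R
  have hsq1 : g' 1 * g' 1 ≤ (k R * g 1) * (k R * g 1) :=
    mul_self_le_mul_self (hg'pos 1 zero_le_one).le hkR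
  refine abs_le_of_sq_le_sq' ?_ (mul_pos (hk_pos R h0R.le) (hpos R h0R)).le |>.2
  simp only at hE
  nlinarith
end

section
/- Let m ≥ 1 be a real number, let k : [0,∞) → (0,∞) be continuous, nondecreasing, with k(r) → +∞ as r → +∞ and ∫₁^∞ dr / k(r) = +∞, and let g ∈ C²([0,∞)) solve g''(r) = k(r)² g(r), g(0) = 0, g'(0) = 1. Then ∫₁^∞ ( ∫₀^r g(t)^m dt / g(r)^m ) dr = +∞, i.e. the function r ↦ ∫₀^r g(t)^m dt / g(r)^m is not integrable at +∞. -/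
open Set Filter MeasureTheory intervalIntegral

/-!
The proof shows `1 / k ≤ A · (∫₀^r g^m) / g^m` on `[1, ∞)` for some constant `A`, so that
integrability of the right-hand side would force integrability of `1 / k`.

* `g ≥ 0`, since `(g²)' = 2 g g'` and `(g g')' = g'² + k² g² ≥ 0` make `g²` nondecreasing, while
  `g > 0` just after `0`.  Hence `g'' ≥ 0`, `g' ≥ 1` and `g(r) ≥ r`.
* Since `k` is nondecreasing, `g'² - k(r)² g²` is nonincreasing on `[0, r]`, which gives
  `g'(r)² ≤ 1 + k(r)² g(r)²`, and so `g' ≤ C k g` on `[1, ∞)` with `C = 1 + 1 / k(0)`.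
* For fixed `r ≥ 1` and a suitable `A ≥ m C`, the function `A k(r) ∫₀^t g^m - g(t)^m` is
  nonnegative at `t = 1` and nondecreasing on `[1, r]`, because
  `(g^m)' = m g^(m-1) g' ≤ m C k(r) g^m` there.  Its value at `t = r` is the desired bound.
-/

theorem monotoneOn_of_ici_deriv {f f' : ℝ → ℝ} {D : Set ℝ} (hD : Convex ℝ D)
    (hD0 : D ⊆ Ici 0) (hf : ∀ x, 0 ≤ x → HasDerivWithinAt f (f' x) (Ici 0) x)
    (hf' : ∀ x ∈ D, 0 ≤ f' x) : MonotoneOn f D := by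
  refine monotoneOn_of_hasDerivWithinAt_nonneg (f' := f') hD
    (fun x hx => ((hf x (hD0 hx)).continuousWithinAt).mono hD0) ?_ ?_
  · intro x hx
    exact (hf x (hD0 (interior_subset hx))).mono (interior_subset.trans hD0)
  · intro x hx
    exact hf' x (interior_subset hx)

theorem solution_nonneg {k g g' g'' : ℝ → ℝ}
    (hg : ∀ r : ℝ, 0 ≤ r → HasDerivWithinAt g (g' r) (Ici 0) r)
    (hg' : ∀ r : ℝ, 0 ≤ r → HasDerivWithinAt g' (g'' r) (Ici 0) r)
    (hODE : ∀ r : ℝ, 0 ≤ r → g'' r = (k r) ^ 2 * g r)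
    (hg0 : g 0 = 0) (hg'0 : g' 0 = 1) (r : ℝ) (hr : 0 ≤ r) : 0 ≤ g r := by
  have hmul : MonotoneOn (fun x => g x * g' x) (Ici 0) := by
    refine monotoneOn_of_ici_deriv (convex_Ici 0) subset_rfl
      (fun x hx => (hg x hx).mul (hg' x hx)) ?_
    intro x hx
    rw [hODE x hx]
    nlinarith [sq_nonneg (g' x), sq_nonneg (k x * g x)]
  have hsq : MonotoneOn (fun x => g x * g x) (Ici 0) := by
    refine monotoneOn_of_ici_deriv (convex_Ici 0) subset_rfl
      (fun x hx => (hg x hx).mul (hg x hx)) ?_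
    intro x hx
    have h := hmul (mem_Ici.2 le_rfl) hx hx
    simp only [hg0, zero_mul] at h
    linarith
  by_contra! hneg
  have hr0 : 0 < r := by
    rcases hr.lt_or_eq with h | h
    · exact h
    · subst h; linarith
  -- As `g'(0) = 1 > 0`, the function `g` is positive at some `s ∈ (0, r)`.
  obtain ⟨s, hs, hs0, hsr⟩ : ∃ s, 0 < g s ∧ 0 < s ∧ s < r := by
    have h1 : Tendsto (slope g 0) (nhdsWithin 0 (Ioi 0)) (nhds 1) := by
      have h := hasDerivWithinAt_iff_tendsto_slope.1 (hg 0 le_rfl)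
      rwa [hg'0, Ici_sdiff_left] at h
    have h2 := h1.eventually (lt_mem_nhds (zero_lt_one (α := ℝ)))
    have h3 : ∀ᶠ x in nhdsWithin (0 : ℝ) (Ioi 0), x ∈ Ioo 0 r := Ioo_mem_nhdsGT hr0
    obtain ⟨s, hs, hs'⟩ := (h2.and h3).exists
    refine ⟨s, ?_, hs'.1, hs'.2⟩
    rw [slope_def_field, hg0, sub_zero, sub_zero] at hs
    exact (div_pos_iff_of_pos_right hs'.1).1 hs
  have hc : ContinuousOn g (Icc s r) := fun x hx =>
    ((hg x (hs0.le.trans hx.1)).continuousWithinAt).mono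
      (fun y hy => hs0.le.trans hy.1)
  obtain ⟨c, hc, hgc⟩ := intermediate_value_Icc' hsr.le hc ⟨hneg.le, hs.le⟩
  have h := hsq (mem_Ici.2 hs0.le) (mem_Ici.2 (hs0.le.trans hc.1)) hc.1
  simp only [hgc] at h
  nlinarith

theorem one_le_deriv {k g g' g'' : ℝ → ℝ}
    (hg : ∀ r : ℝ, 0 ≤ r → HasDerivWithinAt g (g' r) (Ici 0) r)
    (hg' : ∀ r : ℝ, 0 ≤ r → HasDerivWithinAt g' (g'' r) (Ici 0) r)
    (hODE : ∀ r : ℝ, 0 ≤ r → g'' r = (k r) ^ 2 * g r)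
    (hg0 : g 0 = 0) (hg'0 : g' 0 = 1) (r : ℝ) (hr : 0 ≤ r) : 1 ≤ g' r := by
  have h : MonotoneOn g' (Ici 0) := by
    refine monotoneOn_of_ici_deriv (convex_Ici 0) subset_rfl hg' ?_
    intro x hx
    rw [hODE x hx]
    exact mul_nonneg (sq_nonneg _) (solution_nonneg hg hg' hODE hg0 hg'0 x hx)
  simpa [hg'0] using h (mem_Ici.2 le_rfl) hr hr

theorem le_solution {k g g' g'' : ℝ → ℝ}
    (hg : ∀ r : ℝ, 0 ≤ r → HasDerivWithinAt g (g' r) (Ici 0) r)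
    (hg' : ∀ r : ℝ, 0 ≤ r → HasDerivWithinAt g' (g'' r) (Ici 0) r)
    (hODE : ∀ r : ℝ, 0 ≤ r → g'' r = (k r) ^ 2 * g r)
    (hg0 : g 0 = 0) (hg'0 : g' 0 = 1) (r : ℝ) (hr : 0 ≤ r) : r ≤ g r := by
  have h : MonotoneOn (fun x => g x - x) (Ici 0) := by
    refine monotoneOn_of_ici_deriv (convex_Ici 0) subset_rfl
      (fun x hx => (hg x hx).sub (hasDerivWithinAt_id x _)) ?_
    intro x hx
    linarith [one_le_deriv hg hg' hODE hg0 hg'0 x hx]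
  have := h (mem_Ici.2 le_rfl) hr hr
  simp only [hg0] at this
  linarith

/-- The energy estimate `g'² ≤ 1 + k² g²`, in its weaker linear form. -/
theorem deriv_le_one_add {k g g' g'' : ℝ → ℝ}
    (hk_pos : ∀ r : ℝ, 0 ≤ r → 0 < k r) (hk_mono : MonotoneOn k (Ici 0))
    (hg : ∀ r : ℝ, 0 ≤ r → HasDerivWithinAt g (g' r) (Ici 0) r)
    (hg' : ∀ r : ℝ, 0 ≤ r → HasDerivWithinAt g' (g'' r) (Ici 0) r)
    (hODE : ∀ r : ℝ, 0 ≤ r → g'' r = (k r) ^ 2 * g r)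
    (hg0 : g 0 = 0) (hg'0 : g' 0 = 1) (r : ℝ) (hr : 0 ≤ r) : g' r ≤ 1 + k r * g r := by
  have h : MonotoneOn (fun x => k r ^ 2 * (g x * g x) - g' x * g' x) (Icc 0 r) := by
    refine monotoneOn_of_ici_deriv (convex_Icc 0 r) (fun x hx => hx.1)
      (fun x hx => (((hg x hx).mul (hg x hx)).const_mul (k r ^ 2)).sub
        ((hg' x hx).mul (hg' x hx))) ?_
    intro x hx
    rw [hODE x hx.1]
    have h1 := solution_nonneg hg hg' hODE hg0 hg'0 x hx.1
    have h2 := one_le_deriv hg hg' hODE hg0 hg'0 x hx.1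
    have h3 : k x ^ 2 ≤ k r ^ 2 :=
      pow_le_pow_left₀ (hk_pos x hx.1).le (hk_mono hx.1 hr hx.2) 2
    have h4 : 0 ≤ g x * g' x := mul_nonneg h1 (by linarith)
    nlinarith [mul_le_mul_of_nonneg_right h3 h4]
  have h1 := h ⟨le_rfl, hr⟩ ⟨hr, le_rfl⟩ hr
  simp only [hg0, hg'0] at h1
  have h2 : 0 ≤ k r * g r :=
    mul_nonneg (hk_pos r hr).le (solution_nonneg hg hg' hODE hg0 hg'0 r hr)
  exact abs_le_of_sq_le_sq' (by nlinarith) (by linarith) |>.2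

/-- Let `m ≥ 1` be a real number, `k : [0,∞) → (0,∞)` continuous,
nondecreasing, `k(r) → +∞`, with `∫₁^∞ dr/k(r) = +∞`, and let `g ∈ C²([0,∞))` solve
`g'' = k² g`, `g(0)=0`, `g'(0)=1`.  Then `r ↦ (∫₀^r g^m)/g(r)^m` is not integrable
at `+∞`. -/
theorem stmt3
    (m : ℝ) (hm : 1 ≤ m)
    (k : ℝ → ℝ)
    (hk_cont : ContinuousOn k (Set.Ici 0))
    (hk_pos : ∀ r : ℝ, 0 ≤ r → 0 < k r)
    (hk_mono : MonotoneOn k (Set.Ici 0))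
    (hk_infty : Filter.Tendsto k Filter.atTop Filter.atTop)
    (hk_nonint : ¬ MeasureTheory.IntegrableOn (fun r : ℝ => 1 / k r) (Set.Ici 1))
    (g g' g'' : ℝ → ℝ)
    (hg_deriv : ∀ r : ℝ, 0 ≤ r → HasDerivWithinAt g (g' r) (Set.Ici 0) r)
    (hg'_deriv : ∀ r : ℝ, 0 ≤ r → HasDerivWithinAt g' (g'' r) (Set.Ici 0) r)
    (hg''_cont : ContinuousOn g'' (Set.Ici 0))
    (hODE : ∀ r : ℝ, 0 ≤ r → g'' r = (k r) ^ 2 * g r)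
    (hg0 : g 0 = 0) (hg'0 : g' 0 = 1) :
    ¬ MeasureTheory.IntegrableOn
        (fun r : ℝ => (∫ t in (0:ℝ)..r, g t ^ m) / g r ^ m) (Set.Ici 1) := by
  have hk0 : 0 < k 0 := hk_pos 0 le_rfl
  have hkle : ∀ r, 0 ≤ r → k 0 ≤ k r := fun r hr => hk_mono (mem_Ici.2 le_rfl) hr hr
  have hgle := le_solution hg_deriv hg'_deriv hODE hg0 hg'0
  have hgpos : ∀ r, 0 < r → 0 < g r := fun r hr => hr.trans_le (hgle r hr.le)
  have hgc : ContinuousOn g (Ici 0) := fun x hx => (hg_deriv x hx).continuousWithinAt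
  -- A globally continuous extension of `g ^ m` from `[0, ∞)`, convenient for differentiating
  -- the primitive `F`.
  set G : ℝ → ℝ := fun t => g (max t 0) ^ m with hG
  have hGc : Continuous G := by
    have : Continuous fun t : ℝ => g (max t 0) :=
      hgc.comp_continuous (by fun_prop) (fun t => le_max_right t 0)
    exact this.rpow_const fun x => Or.inr (by linarith)
  have hGg : ∀ t, 0 ≤ t → G t = g t ^ m := fun t ht => by simp [hG, max_eq_left ht]
  set F : ℝ → ℝ := fun r => ∫ t in (0:ℝ)..r, G t with hF
  have hFd : ∀ r, HasDerivAt F (G r) r := fun r =>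
    intervalIntegral.integral_hasDerivAt_right (hGc.intervalIntegrable _ _)
      (hGc.stronglyMeasurableAtFilter _ _) hGc.continuousAt
  have hFg : ∀ r, 0 ≤ r → (∫ t in (0:ℝ)..r, g t ^ m) = F r := by
    intro r hr
    refine intervalIntegral.integral_congr fun t ht => ?_
    rw [uIcc_of_le hr] at ht
    exact (hGg t ht.1).symm
  have hF1 : 0 < F 1 := by
    refine intervalIntegral.intervalIntegral_pos_of_pos_on (hGc.intervalIntegrable _ _) ?_
      zero_lt_one
    intro x hx
    rw [hGg x hx.1.le]
    exact Real.rpow_pos_of_pos (hgpos x hx.1) m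
  set C : ℝ := 1 + 1 / k 0 with hC
  have hC0 : 0 < C := by positivity
  have hgC : ∀ r, 1 ≤ r → g' r ≤ C * k r * g r := by
    intro r hr
    have hr0 : 0 ≤ r := by linarith
    have h1 := deriv_le_one_add hk_pos hk_mono hg_deriv hg'_deriv hODE hg0 hg'0 r hr0
    have h2 : 1 ≤ 1 / k 0 * k r := by
      rw [div_mul_eq_mul_div, one_mul, one_le_div hk0]
      exact hkle r hr0
    have h3 : 1 ≤ g r := hr.trans (hgle r hr0)
    have h4 : 1 ≤ 1 / k 0 * k r * g r := one_le_mul_of_one_le_of_one_le h2 h3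
    rw [hC]
    nlinarith
  have hg1 : 0 < g 1 ^ m := Real.rpow_pos_of_pos (hgpos 1 zero_lt_one) m
  -- The second summand makes `A * k r * F 1 ≥ g 1 ^ m`.
  set A : ℝ := m * C + g 1 ^ m / (k 0 * F 1) with hA
  have hA1 : m * C ≤ A := by
    have : 0 < g 1 ^ m / (k 0 * F 1) := by positivity
    linarith
  have hm0 : 0 < m := by linarith
  have hA0 : 0 < A := (mul_pos hm0 hC0).trans_le hA1
  have key : ∀ r, 1 ≤ r → g r ^ m ≤ A * k r * F r := by
    intro r hr
    have hr0 : 0 ≤ r := by linarith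
    have hmono : MonotoneOn (fun t => A * k r * F t - g t ^ m) (Icc 1 r) := by
      have hd : ∀ t, 1 ≤ t → HasDerivAt (fun t => A * k r * F t - g t ^ m)
          (A * k r * G t - g' t * m * g t ^ (m - 1)) t := by
        intro t ht
        have ht0 : 0 < t := by linarith
        exact ((hFd t).const_mul _).sub
          (((hg_deriv t ht0.le).hasDerivAt (Ici_mem_nhds ht0)).rpow_const
            (Or.inl (hgpos t ht0).ne'))
      refine monotoneOn_of_hasDerivWithinAt_nonneg (convex_Icc 1 r)
        (fun t ht => (hd t ht.1).continuousAt.continuousWithinAt)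
        (fun t ht => (hd t (interior_subset ht).1).hasDerivWithinAt) ?_
      intro t ht
      have ht := interior_subset ht
      have ht0 : 0 < t := by linarith [ht.1]
      have hp : 0 < g t ^ (m - 1) := Real.rpow_pos_of_pos (hgpos t ht0) _
      have hsplit : g t ^ m = g t ^ (m - 1) * g t := by
        rw [← Real.rpow_add_one (hgpos t ht0).ne', sub_add_cancel]
      have hkt : k t ≤ k r := hk_mono ht0.le hr0 ht.2
      have hkt0 := hk_pos t ht0.le
      have hgt := hgpos t ht0
      rw [hGg t ht0.le, hsplit, sub_nonneg]
      calc g' t * m * g t ^ (m - 1) ≤ (C * k t * g t) * m * g t ^ (m - 1) := by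
            gcongr; exact hgC t ht.1
        _ = (m * C) * k t * (g t ^ (m - 1) * g t) := by ring
        _ ≤ A * k r * (g t ^ (m - 1) * g t) := by gcongr
    have h := hmono ⟨le_rfl, hr⟩ ⟨hr, le_rfl⟩ hr
    have h1 : g 1 ^ m ≤ A * k r * F 1 := by
      calc g 1 ^ m = g 1 ^ m / (k 0 * F 1) * k 0 * F 1 := by field_simp
        _ ≤ A * k r * F 1 := by
            gcongr
            · linarith [mul_pos hm0 hC0]
            · exact hkle r hr0
    simp only at h
    linarith
  intro hint
  apply hk_nonint
  refine Integrable.mono' (hint.const_mul A) ?_ ?_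
  · refine ContinuousOn.aestronglyMeasurable ?_ measurableSet_Ici
    refine continuousOn_const.div (hk_cont.mono (Ici_subset_Ici.2 zero_le_one)) ?_
    intro x hx
    exact (hk_pos x (zero_le_one.trans hx)).ne'
  · refine (ae_restrict_iff' measurableSet_Ici).2 (Eventually.of_forall fun r hr => ?_)
    have hr0 : 0 < r := zero_lt_one.trans_le hr
    have hkr := hk_pos r hr0.le
    have hp : 0 < g r ^ m := Real.rpow_pos_of_pos (hgpos r hr0) m
    rw [hFg r hr0.le, Real.norm_of_nonneg (by positivity), ← mul_div_assoc,
      div_le_div_iff₀ hkr hp]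
    linarith [key r hr]
end

section
/- Let m ≥ 2 be an integer and let C ≥ 0 and k ≥ 0 be real numbers. Define g(r) = r · exp( (1/(m-1)) ( C r + (k/2) r² ) ) for r ≥ 0. Then ∫₁^∞ ( ∫₀^r g(t)^{m-1} dt / g(r)^{m-1} ) dr = +∞, i.e. the function r ↦ ∫₀^r g(t)^{m-1} dt / g(r)^{m-1} is not integrable at +∞. -/
open Set MeasureTheory intervalIntegral Real

/-!
With `n = m - 1`, the density is `h(t) = g(t)^n = t^n exp(C t + (k/2) t²)`. Since
`(t h(t))' = (n + 1 + C t + k t²) h(t)`, on `[0, r]` with `r ≥ 1` this derivative is at most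
`D r² h(t)`, where `D = n + 1 + C + k`. Integrating gives `r h(r) ≤ D r² ∫₀^r h`, i.e. the
quotient `(∫₀^r h) / h(r)` is at least `D⁻¹ r⁻¹`, and `r⁻¹` is not integrable at infinity.
-/

/-- The integrated form of `(t h)' ≤ D r² h` on `[0, r]`, for
`h(t) = t^n exp(C t + (k/2) t²)` and `D = n + 1 + C + k`. -/
lemma mul_density_le_integral (n : ℕ) (C k : ℝ) (hC : 0 ≤ C) (hk : 0 ≤ k)
    (r : ℝ) (hr : 1 ≤ r) :
    r * (r ^ n * exp (C * r + (k / 2) * r ^ 2)) ≤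
      (n + 1 + C + k) * r ^ 2 * ∫ t in (0:ℝ)..r, t ^ n * exp (C * t + (k / 2) * t ^ 2) := by
  have hderiv : ∀ t ∈ uIcc (0:ℝ) r,
      HasDerivAt (fun t : ℝ => t ^ (n + 1) * exp (C * t + (k / 2) * t ^ 2))
        ((n + 1 + C * t + k * t ^ 2) * (t ^ n * exp (C * t + (k / 2) * t ^ 2))) t := by
    intro t _
    have h1 : HasDerivAt (fun t : ℝ => C * t + (k / 2) * t ^ 2) (C + k * t) t := by
      refine (((hasDerivAt_id t).const_mul C).add
        ((hasDerivAt_pow 2 t).const_mul (k / 2))).congr_deriv ?_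
      simp
      ring
    refine ((hasDerivAt_pow (n + 1) t).mul h1.exp).congr_deriv ?_
    simp
    ring
  have hint := integral_eq_sub_of_hasDerivAt hderiv
    (Continuous.intervalIntegrable (by fun_prop) _ _)
  have hle : ∫ t in (0:ℝ)..r,
        (n + 1 + C * t + k * t ^ 2) * (t ^ n * exp (C * t + (k / 2) * t ^ 2)) ≤
      ∫ t in (0:ℝ)..r,
        (n + 1 + C + k) * r ^ 2 * (t ^ n * exp (C * t + (k / 2) * t ^ 2)) := by
    refine integral_mono_on (by linarith)
      (Continuous.intervalIntegrable (by fun_prop) _ _)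
      (Continuous.intervalIntegrable (by fun_prop) _ _) ?_
    rintro t ⟨ht0, htr⟩
    have hr2 : 1 ≤ r ^ 2 := one_le_pow₀ hr
    have ht1 : t ≤ r ^ 2 := by nlinarith
    have ht2 : t ^ 2 ≤ r ^ 2 := by gcongr
    have hn : (0:ℝ) ≤ n + 1 := by positivity
    refine mul_le_mul_of_nonneg_right ?_ (by positivity)
    nlinarith [mul_le_mul_of_nonneg_left hr2 hn, mul_le_mul_of_nonneg_left ht1 hC,
      mul_le_mul_of_nonneg_left ht2 hk]
  rw [hint, intervalIntegral.integral_const_mul] at hle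
  refine le_trans (le_of_eq ?_) hle
  simp
  ring

/-- Let `m ≥ 2` be an integer, `C ≥ 0`, `k ≥ 0`, and let
`g(r) = r · exp((1/(m-1))(C r + (k/2) r²))`.  Then the function
`r ↦ (∫₀^r g^{m-1})/g(r)^{m-1}` is not integrable at `+∞`. -/
theorem stmt4
    (m : ℕ) (hm : 2 ≤ m)
    (C k : ℝ) (hC : 0 ≤ C) (hk : 0 ≤ k)
    (g : ℝ → ℝ)
    (hg : ∀ r : ℝ, 0 ≤ r →
      g r = r * Real.exp ((1 / ((m : ℝ) - 1)) * (C * r + (k / 2) * r ^ 2))) :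
    ¬ MeasureTheory.IntegrableOn
        (fun r : ℝ => (∫ t in (0:ℝ)..r, g t ^ (m - 1)) / g r ^ (m - 1))
        (Set.Ici 1) := by
  obtain ⟨n, rfl⟩ : ∃ n, m = n + 1 := ⟨m - 1, by omega⟩
  have hn : (n : ℝ) ≠ 0 := by
    have : n ≠ 0 := by omega
    exact_mod_cast this
  have hpow : ∀ r : ℝ, 0 ≤ r → g r ^ n = r ^ n * exp (C * r + (k / 2) * r ^ 2) := by
    intro r hr
    rw [hg r hr, mul_pow, ← Real.exp_nat_mul]
    congr 2
    push_cast
    rw [add_sub_cancel_right]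
    field_simp
  simp only [Nat.add_sub_cancel]
  intro hI
  have hD : (0:ℝ) < n + 1 + C + k := by positivity
  refine not_integrableOn_Ioi_inv (a := 1) ?_
  refine ((hI.mono_set Ioi_subset_Ici_self).const_mul (n + 1 + C + k)).mono'
    (by fun_prop) ?_
  filter_upwards [ae_restrict_mem measurableSet_Ioi] with r hr
  have hr1 : (1:ℝ) < r := hr
  have hr0 : (0:ℝ) < r := by linarith
  have hcongr : ∫ t in (0:ℝ)..r, g t ^ n =
      ∫ t in (0:ℝ)..r, t ^ n * exp (C * t + (k / 2) * t ^ 2) := by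
    refine integral_congr fun t ht => hpow t ?_
    rw [uIcc_of_le hr0.le] at ht
    exact ht.1
  have key := mul_density_le_integral n C k hC hk r hr1.le
  rw [hcongr, hpow r hr0.le, Real.norm_of_nonneg (by positivity), ← mul_div_assoc,
    le_div_iff₀ (by positivity), inv_mul_le_iff₀ hr0]
  refine le_of_mul_le_mul_left ?_ hr0
  linarith
end

section
/- Let a < b ≤ +∞, let w ∈ C¹((a,b)) with w(t) > 0 for all t, and let c > 0. Assume that |w'(t)| ≥ c·w(t) for all t ∈ (a,b) and that w' has constant sign on (a,b) (i.e. w' ≥ 0 throughout or w' ≤ 0 throughout). Then for every continuously differentiable function v : (a,b) → ℝ with compact support in (a,b), (c²/4) ∫_a^b v(t)² w(t) dt ≤ ∫_a^b v'(t)² w(t) dt. -/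
open Set MeasureTheory

/-!
Let `s = ±1` be the sign of `w'`, so that `s * w' = |w'| ≥ c * w`. Then pointwise
`v'² w - (c²/4) v² w + s (c/2) (v² w)' = (v' + s (c/2) v)² w + (c/2) v² (|w'| - c w) ≥ 0`.
The function `v² w`, extended by zero, is `C¹` with compact support, so the integral of its
derivative vanishes and integrating this inequality gives the claim. This is integration by
parts and Cauchy–Schwarz, the latter in the form of a completed square.
-/

/-- A continuous function compactly supported in an open set, multiplied by a function that is
continuous only on that set, is integrable on the whole line. -/
lemma integrable_mul_of_tsupport_subset {I : Set ℝ} (hI : IsOpen I) {u g : ℝ → ℝ}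
    (hu : Continuous u) (hc : HasCompactSupport u) (hs : tsupport u ⊆ I)
    (hg : ContinuousOn g I) : Integrable (fun t => u t * g t) := by
  refine Continuous.integrable_of_hasCompactSupport ?_ hc.mul_right
  refine (hu.continuousOn.mul hg).continuous_of_tsupport_subset hI ?_
  exact (tsupport_mul_subset_left (f := u) (g := g)).trans hs

/-- one-dimensional weighted Poincaré inequality.  Let
`I = (a,b)` with `a < b ≤ +∞`, `w ∈ C¹(I)` positive with `|w'| ≥ c w` on `I`
(`c > 0`) and `w'` of constant sign on `I`.  Then for every `C¹` function `v`
with compact support contained in `I`,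
`(c²/4) ∫_I v² w ≤ ∫_I (v')² w`. -/
theorem stmt8
    (a : ℝ) (b : EReal) (hab : (a : EReal) < b)
    (I : Set ℝ) (hI : I = {t : ℝ | a < t ∧ (t : EReal) < b})
    (w w' : ℝ → ℝ)
    (hw_deriv : ∀ t ∈ I, HasDerivAt w (w' t) t)
    (hw'_cont : ContinuousOn w' I)
    (hw_pos : ∀ t ∈ I, 0 < w t)
    (c : ℝ) (hc : 0 < c)
    (hlower : ∀ t ∈ I, c * w t ≤ |w' t|)
    (hsign : (∀ t ∈ I, 0 ≤ w' t) ∨ (∀ t ∈ I, w' t ≤ 0)) :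
    ∀ v : ℝ → ℝ, ContDiff ℝ 1 v → HasCompactSupport v → tsupport v ⊆ I →
      (c ^ 2 / 4) * ∫ t in I, (v t) ^ 2 * w t ≤ ∫ t in I, (deriv v t) ^ 2 * w t := by
  intro v hv hvc hvs
  have hIo : IsOpen I := by
    rw [hI]
    exact isOpen_Ioi.inter (isOpen_lt continuous_coe_real_ereal continuous_const)
  have hw_cont : ContinuousOn w I := fun t ht =>
    (hw_deriv t ht).continuousAt.continuousWithinAt
  have hdv : Continuous (deriv v) := hv.continuous_deriv le_rfl
  have hv0 : ∀ t, t ∉ I → v t = 0 := fun t ht =>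
    image_eq_zero_of_notMem_tsupport fun h => ht (hvs h)
  have hdv0 : ∀ t, t ∉ I → deriv v t = 0 := fun t ht =>
    image_eq_zero_of_notMem_tsupport fun h =>
      ht (hvs (tsupport_deriv_subset (𝕜 := ℝ) h))
  have hint1 : Integrable (fun t => v t ^ 2 * w t) := by
    have := integrable_mul_of_tsupport_subset hIo hv.continuous hvc hvs
      (hv.continuous.continuousOn.mul hw_cont)
    exact this.congr (Filter.Eventually.of_forall fun t => by simp only [Pi.mul_apply]; ring)
  have hint2 : Integrable (fun t => deriv v t ^ 2 * w t) := by
    have := integrable_mul_of_tsupport_subset hIo hdv hvc.deriv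
      ((tsupport_deriv_subset (𝕜 := ℝ)).trans hvs) (hdv.continuousOn.mul hw_cont)
    exact this.congr (Filter.Eventually.of_forall fun t => by simp only [Pi.mul_apply]; ring)
  have hint3 : Integrable (fun t => 2 * v t * deriv v t * w t + v t ^ 2 * w' t) := by
    have := integrable_mul_of_tsupport_subset hIo hv.continuous hvc hvs
      (((hdv.continuousOn.mul hw_cont).const_smul (2 : ℝ)).add
        (hv.continuous.continuousOn.mul hw'_cont))
    exact this.congr (Filter.Eventually.of_forall fun t => by
      simp only [Pi.add_apply, Pi.smul_apply, Pi.mul_apply, smul_eq_mul]; ring)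
  have hder : ∀ t, HasDerivAt (fun t => v t ^ 2 * w t)
      (2 * v t * deriv v t * w t + v t ^ 2 * w' t) t := by
    intro t
    by_cases ht : t ∈ I
    · have h := (((hv.differentiable one_ne_zero) t).hasDerivAt.pow 2).mul (hw_deriv t ht)
      exact h.congr_deriv (by simp)
    -- Outside `I`, `w` may be arbitrary, but `v` vanishes in a neighbourhood of `t`.
    · have hnear : (fun t => v t ^ 2 * w t) =ᶠ[nhds t] fun _ => 0 := by
        filter_upwards [notMem_tsupport_iff_eventuallyEq.mp fun h => ht (hvs h)] with x hx
        simp [hx]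
      simpa [hv0 t ht] using (hasDerivAt_const t (0 : ℝ)).congr_of_eventuallyEq hnear
  have hzero : ∫ t, (2 * v t * deriv v t * w t + v t ^ 2 * w' t) = 0 :=
    integral_eq_zero_of_hasDerivAt_of_integrable hder hint3 hint1
  obtain ⟨s, hs1, hs⟩ : ∃ s : ℝ, s ^ 2 = 1 ∧ ∀ t ∈ I, s * w' t = |w' t| := by
    rcases hsign with h | h
    · exact ⟨1, by norm_num, fun t ht => by rw [abs_of_nonneg (h t ht), one_mul]⟩
    · exact ⟨-1, by norm_num, fun t ht => by rw [abs_of_nonpos (h t ht), neg_one_mul]⟩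
  rw [setIntegral_eq_integral_of_forall_compl_eq_zero fun t ht => by simp [hv0 t ht],
    setIntegral_eq_integral_of_forall_compl_eq_zero fun t ht => by simp [hdv0 t ht]]
  have hmono : ∫ t, c ^ 2 / 4 * (v t ^ 2 * w t) ≤ ∫ t, (deriv v t ^ 2 * w t +
      s * (c / 2) * (2 * v t * deriv v t * w t + v t ^ 2 * w' t)) := by
    refine integral_mono (hint1.const_mul _) (hint2.add (hint3.const_mul _)) fun t => ?_
    by_cases ht : t ∈ I
    · have h1 : 0 ≤ (deriv v t + s * (c / 2) * v t) ^ 2 * w t :=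
        mul_nonneg (sq_nonneg _) (hw_pos t ht).le
      have h2 : 0 ≤ c / 2 * v t ^ 2 * (s * w' t - c * w t) := by
        rw [hs t ht]
        exact mul_nonneg (by positivity) (sub_nonneg.mpr (hlower t ht))
      dsimp only
      linear_combination h1 + h2 + c ^ 2 / 4 * v t ^ 2 * w t * hs1
    · simp [hv0 t ht, hdv0 t ht]
  rw [integral_const_mul, integral_add hint2 (hint3.const_mul _), integral_const_mul, hzero]
    at hmono
  simpa using hmono
end

section
/- Let m ≥ 2 be an integer and α > 0 a real number. The function r ↦ e^{(m-1) r^α} ∫_r^∞ e^{-(m-1) t^α} dt, defined for r ≥ 1, is integrable on [1,∞) if and only if α > 2. -/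
/-!
Write `c = m - 1 > 0` and `F r = e^{c r^α} ∫_r^∞ e^{-c t^α} dt`. Two explicit antiderivatives give
the two directions.

* The derivative of `-e^{-c t^α}` is `c α t^{α-1} e^{-c t^α}`, which for `t ≥ r ≥ 1` and `α ≥ 1` is
  at least `c α r^{α-1} e^{-c t^α}`. Integrating, `F r ≤ r^{1-α} / (c α)` (`tail_le`), which is
  integrable at infinity when `α > 2`.
* The derivative of `-t⁻¹ e^{-c t^α}` is `(t^{-2} + c α t^{α-2}) e^{-c t^α}`, which for `t ≥ 1` and
  `α ≤ 2` is at most `(1 + c α) e^{-c t^α}`. Integrating, `F r ≥ r⁻¹ / (1 + c α)` (`le_tail`), so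
  `F` is not integrable when `α ≤ 2`.
-/

open Set MeasureTheory Real

lemma integrableOn_exp_tail {c α r : ℝ} (hc : 0 < c) (hα : 0 < α) (hr : 1 ≤ r) :
    IntegrableOn (fun t : ℝ => exp (-(c * t ^ α))) (Ioi r) := by
  have h := integrableOn_rpow_mul_exp_neg_mul_rpow (s := 0) (by norm_num) hα hc
  simp only [rpow_zero, one_mul, neg_mul] at h
  exact h.mono_set (Ioi_subset_Ioi (by linarith))

lemma hasDerivAt_exp_tail {c α t : ℝ} (ht : 0 < t) :
    HasDerivAt (fun t : ℝ => exp (-(c * t ^ α)))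
      (-(c * α * t ^ (α - 1) * exp (-(c * t ^ α)))) t := by
  have h := (((hasDerivAt_rpow_const (p := α) (Or.inl ht.ne')).const_mul c).neg).exp
  refine h.congr_deriv ?_
  simp only [Pi.neg_apply]
  ring

lemma tendsto_exp_tail {c α : ℝ} (hc : 0 < c) (hα : 0 < α) :
    Filter.Tendsto (fun t : ℝ => exp (-(c * t ^ α))) Filter.atTop (nhds 0) :=
  tendsto_exp_neg_atTop_nhds_zero.comp ((tendsto_rpow_atTop hα).const_mul_atTop hc)

lemma tail_le {c α r : ℝ} (hc : 0 < c) (hα : 1 ≤ α) (hr : 1 ≤ r) :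
    exp (c * r ^ α) * ∫ t in Ioi r, exp (-(c * t ^ α)) ≤ (c * α)⁻¹ * r ^ (1 - α) := by
  have hα0 : 0 < α := by linarith
  have hr0 : 0 < r := by linarith
  have hd : ∀ x ∈ Ici r, HasDerivAt (fun t : ℝ => exp (-(c * t ^ α)))
      (-(c * α * x ^ (α - 1) * exp (-(c * x ^ α)))) x :=
    fun x hx => hasDerivAt_exp_tail (lt_of_lt_of_le hr0 hx)
  have hn : ∀ x ∈ Ioi r, -(c * α * x ^ (α - 1) * exp (-(c * x ^ α))) ≤ 0 := by
    intro x hx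
    have : 0 < x := hr0.trans hx
    have : 0 ≤ c * α * x ^ (α - 1) * exp (-(c * x ^ α)) := by positivity
    linarith
  have hint := integrableOn_Ioi_deriv_of_nonpos' hd hn (tendsto_exp_tail hc hα0)
  have heq := integral_Ioi_of_hasDerivAt_of_nonpos' hd hn (tendsto_exp_tail hc hα0)
  have hle : ∫ x in Ioi r, -(c * α * x ^ (α - 1) * exp (-(c * x ^ α))) ≤
      ∫ x in Ioi r, -(c * α * r ^ (α - 1)) * exp (-(c * x ^ α)) := by
    refine setIntegral_mono_on hint ((integrableOn_exp_tail hc hα0 hr).const_mul _)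
      measurableSet_Ioi fun x hx => ?_
    have : r ^ (α - 1) ≤ x ^ (α - 1) := rpow_le_rpow hr0.le (le_of_lt hx) (by linarith)
    rw [neg_mul, neg_le_neg_iff]
    gcongr
  rw [heq, integral_const_mul] at hle
  have hk : c * α * r ^ (α - 1) * ∫ t in Ioi r, exp (-(c * t ^ α)) ≤ exp (-(c * r ^ α)) := by
    linarith
  have hp : 0 < r ^ (α - 1) := rpow_pos_of_pos hr0 _
  have hinv : r ^ (1 - α) = (r ^ (α - 1))⁻¹ := by rw [← rpow_neg hr0.le]; congr 1; ring
  rw [hinv, ← mul_inv, ← one_div, le_div_iff₀ (by positivity)]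
  calc _ = exp (c * r ^ α) * (c * α * r ^ (α - 1) * ∫ t in Ioi r, exp (-(c * t ^ α))) := by ring
    _ ≤ exp (c * r ^ α) * exp (-(c * r ^ α)) := by gcongr
    _ = 1 := by rw [← exp_add]; simp

lemma le_tail {c α r : ℝ} (hc : 0 < c) (hα : 0 < α) (hα2 : α ≤ 2) (hr : 1 ≤ r) :
    (1 + c * α)⁻¹ * r⁻¹ ≤ exp (c * r ^ α) * ∫ t in Ioi r, exp (-(c * t ^ α)) := by
  have hr0 : 0 < r := by linarith
  have hd : ∀ x ∈ Ici r, HasDerivAt (fun t : ℝ => t⁻¹ * exp (-(c * t ^ α)))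
      (-(((x ^ 2)⁻¹ + c * α * (x⁻¹ * x ^ (α - 1))) * exp (-(c * x ^ α)))) x := by
    intro x hx
    have hx0 : 0 < x := lt_of_lt_of_le hr0 hx
    refine ((hasDerivAt_inv hx0.ne').mul
      (hasDerivAt_exp_tail (c := c) (α := α) hx0)).congr_deriv ?_
    ring
  have hn : ∀ x ∈ Ioi r,
      -(((x ^ 2)⁻¹ + c * α * (x⁻¹ * x ^ (α - 1))) * exp (-(c * x ^ α))) ≤ 0 := by
    intro x hx
    have : 0 < x := hr0.trans hx
    have : 0 ≤ ((x ^ 2)⁻¹ + c * α * (x⁻¹ * x ^ (α - 1))) * exp (-(c * x ^ α)) := by positivity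
    linarith
  have hlim : Filter.Tendsto (fun t : ℝ => t⁻¹ * exp (-(c * t ^ α))) Filter.atTop (nhds 0) := by
    simpa using tendsto_inv_atTop_zero.mul (tendsto_exp_tail hc hα)
  have hint := integrableOn_Ioi_deriv_of_nonpos' hd hn hlim
  have heq := integral_Ioi_of_hasDerivAt_of_nonpos' hd hn hlim
  have hle : ∫ x in Ioi r, -(1 + c * α) * exp (-(c * x ^ α)) ≤
      ∫ x in Ioi r, -(((x ^ 2)⁻¹ + c * α * (x⁻¹ * x ^ (α - 1))) * exp (-(c * x ^ α))) := by
    refine setIntegral_mono_on ((integrableOn_exp_tail hc hα hr).const_mul _) hint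
      measurableSet_Ioi fun x hx => ?_
    have hx1 : 1 ≤ x := hr.trans (le_of_lt hx)
    have hx0 : 0 < x := by linarith
    have h1 : (x ^ 2)⁻¹ ≤ 1 := inv_le_one_of_one_le₀ (one_le_pow₀ hx1)
    have h2 : x⁻¹ * x ^ (α - 1) ≤ 1 := by
      rw [← rpow_neg_one, ← rpow_add hx0]
      exact rpow_le_one_of_one_le_of_nonpos hx1 (by linarith)
    have h3 : c * α * (x⁻¹ * x ^ (α - 1)) ≤ c * α := mul_le_of_le_one_right (by positivity) h2
    rw [neg_mul, neg_le_neg_iff]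
    gcongr
  rw [heq, integral_const_mul] at hle
  have hk : r⁻¹ * exp (-(c * r ^ α)) ≤ (1 + c * α) * ∫ t in Ioi r, exp (-(c * t ^ α)) := by
    linarith
  rw [inv_mul_le_iff₀ (by positivity)]
  calc r⁻¹ = exp (c * r ^ α) * (r⁻¹ * exp (-(c * r ^ α))) := by
        rw [mul_left_comm, ← exp_add]; simp
    _ ≤ exp (c * r ^ α) * ((1 + c * α) * ∫ t in Ioi r, exp (-(c * t ^ α))) := by gcongr
    _ = _ := by ring

/-- for an integer `m ≥ 2` and a real `α > 0`, the function
`r ↦ e^{(m-1) r^α} ∫_r^∞ e^{-(m-1) t^α} dt` is integrable on `[1,∞)` if and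
only if `α > 2`. -/
theorem stmt9
    (m : ℕ) (hm : 2 ≤ m) (α : ℝ) (hα : 0 < α) :
    MeasureTheory.IntegrableOn
        (fun r : ℝ =>
          Real.exp (((m : ℝ) - 1) * r ^ α) *
            ∫ t in Set.Ioi r, Real.exp (-(((m : ℝ) - 1) * t ^ α)))
        (Set.Ici 1) ↔ 2 < α := by
  have hc : 0 < (m : ℝ) - 1 := by
    have : (2 : ℝ) ≤ m := by exact_mod_cast hm
    linarith
  generalize (m : ℝ) - 1 = c at hc
  constructor
  · intro h
    by_contra! hα2
    have hI : IntegrableOn (fun r : ℝ => (1 + c * α)⁻¹ * r⁻¹) (Ici 1) := by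
      refine Integrable.mono' h (by fun_prop) ?_
      filter_upwards [ae_restrict_mem measurableSet_Ici] with r hr
      have hr0 : (0 : ℝ) < r := lt_of_lt_of_le one_pos hr
      rw [norm_of_nonneg (by positivity)]
      exact le_tail hc hα hα2 hr
    have hJ : IntegrableOn (fun r : ℝ => r ^ (-1 : ℝ)) (Ioi 1) := by
      refine IntegrableOn.congr_fun
        (IntegrableOn.mono_set (hI.const_mul (1 + c * α)) Ioi_subset_Ici_self)
        (fun r _ => ?_) measurableSet_Ioi
      have : 1 + c * α ≠ 0 := by positivity
      simp only [rpow_neg_one]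
      field_simp
    exact lt_irrefl _ ((integrableOn_Ioi_rpow_iff one_pos).1 hJ)
  · intro hα2
    have hI : IntegrableOn (fun r : ℝ => (c * α)⁻¹ * r ^ (1 - α)) (Ici 1) := by
      rw [integrableOn_Ici_iff_integrableOn_Ioi]
      exact ((integrableOn_Ioi_rpow_iff one_pos).2 (by linarith)).const_mul _
    -- The tail integral is monotone in its endpoint on `[1, ∞)`, hence measurable there.
    have hanti : AntitoneOn (fun r : ℝ => ∫ t in Ioi r, exp (-(c * t ^ α))) (Ici 1) := by
      intro r hr s _ hrs
      exact setIntegral_mono_set (integrableOn_exp_tail hc hα hr)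
        (Filter.Eventually.of_forall fun t => (exp_pos _).le)
        (Ioi_subset_Ioi hrs).eventuallyLE
    have hmeas := aemeasurable_restrict_of_antitoneOn (μ := volume) measurableSet_Ici hanti
    refine Integrable.mono' hI
      (AEMeasurable.aestronglyMeasurable (AEMeasurable.mul (by fun_prop) hmeas)) ?_
    filter_upwards [ae_restrict_mem measurableSet_Ici] with r hr
    rw [norm_of_nonneg (mul_nonneg (exp_pos _).le (integral_nonneg fun t => (exp_pos _).le))]
    exact tail_le hc (by linarith) hr
end

section
/- Let n > 1 be a real number, R₀ ≥ 0, λ > 0, and let g ∈ C¹([R₀,∞)) with g(r) > 0 for all r ≥ R₀. Assume that either (i) ∫^∞ g(r)^{1-n} dr < +∞, or (ii) ∫^∞ g(r)^{1-n} dr = +∞ and in addition either ∫^∞ g(r)^{n-1} dr = +∞ or ∫_{R₀}^∞ ( ∫_r^∞ g(t)^{n-1} dt / g(r)^{n-1} ) dr = +∞. Then there exists a function β ∈ C²([R₀,∞)) satisfying β''(r) + (n-1)(g'(r)/g(r)) β'(r) = λ β(r) for all r ≥ R₀, with β(R₀) = 1, 0 < β(r) ≤ 1 and β'(r) ≤ 0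 for all r ≥ R₀, and β(r) → 0 as r → +∞. -/
/-!
With the weight `w = g ^ (n - 1)` the equation reads `(w β')' = λ w β`.

An increasing solution `u ≥ 1` with `u(a) = 1`, `u'(a) = 0` is the limit of the increasing Picard
iterates of `u = 1 + T u`, `T f (r) = ∫ₐʳ λ w(s)⁻¹ ∫ₐˢ w f`; they are bounded by the supersolution
`exp (T 1)` (`volterra_exp_le`, `exists_volterra_fixed`). As the flux `q = w u'` is increasing,
`∫_r^∞ 1/(w u²) ≤ 1/(q(r) u(r))`. Reduction of order then gives the second solution
`β = c u ∫_r^∞ 1/(w u²)`, which is positive, and decreasing exactly by this tail estimate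
(`exists_decreasing_solution`).

For the decay: if `1/w` is integrable, then `u(r) ∫_r^∞ 1/(w u²) ≤ ∫_r^∞ 1/w → 0`. Otherwise, if
`β ≥ L > 0`, then `(w β')' ≥ λ L w` with `w β' ≤ 0` forces `w` to be integrable and
`-β' ≥ λ L w⁻¹ ∫_r^∞ w`, so that the latter function is integrable too because `β` is bounded
(`integrable_of_lower_bound`). This contradicts the remaining alternatives of the hypothesis.
-/

open Set Filter MeasureTheory Real

theorem antitoneOn_Ici_of_hasDerivAt {f f' : ℝ → ℝ} {a : ℝ}
    (hf : ∀ x, a ≤ x → HasDerivAt f (f' x) x) (hf' : ∀ x, a ≤ x → f' x ≤ 0) :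
    AntitoneOn f (Ici a) := by
  refine antitoneOn_of_hasDerivWithinAt_nonpos (f' := f') (convex_Ici a)
    (fun x hx => (hf x hx).continuousAt.continuousWithinAt) ?_ ?_
  · intro x hx
    exact (hf x (interior_subset hx)).hasDerivWithinAt
  · intro x hx
    exact hf' x (interior_subset hx)

/-! ### The increasing solution -/

/-- The Volterra operator `f ↦ ∫ₐʳ λ w(s)⁻¹ ∫ₐˢ w f` whose fixed points `v = 1 + T v` solve
`(w v')' = λ w v`, `v(a) = 1`, `v'(a) = 0`. -/
noncomputable def volterra (w : ℝ → ℝ) (lam a : ℝ) (f : ℝ → ℝ) (r : ℝ) : ℝ :=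
  ∫ s in a..r, (lam * ∫ t in a..s, w t * f t) / w s

section Volterra

variable {w : ℝ → ℝ} {lam a : ℝ}

theorem continuous_flux (hw : Continuous w) (hw0 : ∀ r, 0 < w r) {f : ℝ → ℝ}
    (hf : Continuous f) :
    Continuous fun s => (lam * ∫ t in a..s, w t * f t) / w s := by
  refine Continuous.div (continuous_const.mul ?_) hw (fun r => (hw0 r).ne')
  exact intervalIntegral.continuous_primitive
    (fun x y => (hw.mul hf).intervalIntegrable x y) a

theorem hasDerivAt_volterra (hw : Continuous w) (hw0 : ∀ r, 0 < w r) {f : ℝ → ℝ}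
    (hf : Continuous f) (r : ℝ) :
    HasDerivAt (volterra w lam a f) ((lam * ∫ t in a..r, w t * f t) / w r) r :=
  ((continuous_flux hw hw0 hf).integral_hasStrictDerivAt a r).hasDerivAt

theorem continuous_volterra (hw : Continuous w) (hw0 : ∀ r, 0 < w r) {f : ℝ → ℝ}
    (hf : Continuous f) : Continuous (volterra w lam a f) :=
  continuous_iff_continuousAt.2 fun r => (hasDerivAt_volterra hw hw0 hf r).continuousAt

theorem volterra_mono (hw : Continuous w) (hw0 : ∀ r, 0 < w r) (hlam : 0 < lam) {f h : ℝ → ℝ}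
    (hf : Continuous f) (hh : Continuous h) (hfh : ∀ t, a ≤ t → f t ≤ h t) {r : ℝ} (hr : a ≤ r) :
    volterra w lam a f r ≤ volterra w lam a h r := by
  refine intervalIntegral.integral_mono_on hr
    ((continuous_flux hw hw0 hf).intervalIntegrable _ _)
    ((continuous_flux hw hw0 hh).intervalIntegrable _ _) fun s hs => ?_
  have : ∫ t in a..s, w t * f t ≤ ∫ t in a..s, w t * h t :=
    intervalIntegral.integral_mono_on hs.1 ((hw.mul hf).intervalIntegrable _ _)
      ((hw.mul hh).intervalIntegrable _ _) fun t ht =>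
        mul_le_mul_of_nonneg_left (hfh t ht.1) (hw0 t).le
  have := hw0 s
  gcongr

theorem volterra_self (f : ℝ → ℝ) : volterra w lam a f a = 0 := by
  simp [volterra]

/-- `exp (T 1)` is a supersolution of the fixed point equation `v = 1 + T v`. -/
theorem volterra_exp_le (hw : Continuous w) (hw0 : ∀ r, 0 < w r) (hlam : 0 < lam) {r : ℝ}
    (hr : a ≤ r) :
    1 + volterra w lam a (fun t => exp (volterra w lam a (fun _ => 1) t)) r
      ≤ exp (volterra w lam a (fun _ => 1) r) := by
  set h := volterra w lam a (fun _ => 1) with hh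
  have hhd := fun r => hasDerivAt_volterra (lam := lam) (a := a) hw hw0
    (continuous_const (y := (1 : ℝ))) r
  have hhc : Continuous h := continuous_volterra hw hw0 continuous_const
  have hEc : Continuous fun t => exp (h t) := continuous_exp.comp hhc
  have hint : ∀ s, a ≤ s → 0 ≤ ∫ t in a..s, w t * (1 : ℝ) := fun s hs =>
    intervalIntegral.integral_nonneg hs fun t _ => by simpa using (hw0 t).le
  have hmono : AntitoneOn (fun r => - h r) (Ici a) :=
    antitoneOn_Ici_of_hasDerivAt (fun x _ => (hhd x).neg) fun x hx => by
      have := hint x hx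
      have := hw0 x
      rw [neg_nonpos]; positivity
  have hanti : AntitoneOn (fun r => volterra w lam a (fun t => exp (h t)) r - exp (h r))
      (Ici a) := by
    refine antitoneOn_Ici_of_hasDerivAt
      (fun x _ => (hasDerivAt_volterra hw hw0 hEc x).sub (hhd x).exp) fun x hx => ?_
    have key : ∫ t in a..x, w t * exp (h t) ≤ exp (h x) * ∫ t in a..x, w t * (1 : ℝ) := by
      rw [← intervalIntegral.integral_const_mul]
      refine intervalIntegral.integral_mono_on hx ((hw.mul hEc).intervalIntegrable _ _)
        ((continuous_const.mul (hw.mul continuous_const)).intervalIntegrable _ _) fun t ht => ?_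
      have h1 : exp (h t) ≤ exp (h x) := by
        have := hmono ht.1 hx ht.2
        exact exp_le_exp.2 (by simpa using this)
      nlinarith [hw0 t]
    rw [sub_nonpos, ← mul_div_assoc]
    have := hw0 x
    refine div_le_div_of_nonneg_right ?_ this.le
    nlinarith
  have := hanti self_mem_Ici hr hr
  simp only [hh, volterra_self, exp_zero] at this ⊢
  linarith

/-- Picard iterates of `v = 1 + T v` starting from `1`, frozen to the left of `a`. -/
noncomputable def picard (w : ℝ → ℝ) (lam a : ℝ) : ℕ → ℝ → ℝ
  | 0 => fun _ => 1
  | k + 1 => fun r => 1 + volterra w lam a (picard w lam a k) (max a r)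

theorem continuous_picard (hw : Continuous w) (hw0 : ∀ r, 0 < w r) (k : ℕ) :
    Continuous (picard w lam a k) := by
  induction k with
  | zero => exact continuous_const
  | succ k ih =>
    exact continuous_const.add
      ((continuous_volterra hw hw0 ih).comp (continuous_const.max continuous_id))

theorem one_le_picard (hw : Continuous w) (hw0 : ∀ r, 0 < w r) (hlam : 0 < lam) (k : ℕ) (r : ℝ) :
    1 ≤ picard w lam a k r := by
  induction k generalizing r with
  | zero => exact le_rfl
  | succ k ih =>
    have := volterra_mono (a := a) (f := fun _ => 0) hw hw0 hlam continuous_const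
      (continuous_picard hw hw0 k) (fun t _ => zero_le_one.trans (ih t)) (le_max_left a r)
    have h0 : volterra w lam a (fun _ => 0) (max a r) = 0 := by simp [volterra]
    simp only [picard]
    linarith

theorem picard_le_succ (hw : Continuous w) (hw0 : ∀ r, 0 < w r) (hlam : 0 < lam) (k : ℕ) (r : ℝ) :
    picard w lam a k r ≤ picard w lam a (k + 1) r := by
  induction k generalizing r with
  | zero => exact one_le_picard hw hw0 hlam 1 r
  | succ k ih =>
    have := volterra_mono (a := a) hw hw0 hlam (continuous_picard hw hw0 k)
      (continuous_picard hw hw0 (k + 1)) (fun t _ => ih t) (le_max_left a r)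
    simp only [picard] at this ⊢
    linarith

/-- The Picard iterates stay below the supersolution of `volterra_exp_le`. -/
theorem picard_le_exp (hw : Continuous w) (hw0 : ∀ r, 0 < w r) (hlam : 0 < lam) (k : ℕ) (r : ℝ) :
    picard w lam a k r ≤ exp (volterra w lam a (fun _ => 1) (max a r)) := by
  induction k generalizing r with
  | zero =>
    have := volterra_mono (a := a) (f := fun _ => 0) (h := fun _ => 1) hw hw0 hlam
      continuous_const continuous_const (fun t _ => zero_le_one) (le_max_left a r)
    have h0 : volterra w lam a (fun _ => 0) (max a r) = 0 := by simp [volterra]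
    simp only [picard]
    exact one_le_exp (by linarith)
  | succ k ih =>
    have h1 := volterra_mono (a := a) hw hw0 hlam (continuous_picard hw hw0 k)
      (continuous_exp.comp (continuous_volterra (a := a) (lam := lam) hw hw0
        (continuous_const (y := (1 : ℝ)))))
      (fun t ht => by simpa [max_eq_right ht] using ih t) (le_max_left a r)
    have h2 := volterra_exp_le hw hw0 hlam (le_max_left a r)
    simp only [picard]
    exact (add_le_add_right h1 1).trans h2

/-- The limit `v` of the Picard iterates. The fixed point equation follows by dominated convergence
in both integrals, and it yields the continuity of `v`. -/
theorem exists_volterra_fixed (hw : Continuous w) (hw0 : ∀ r, 0 < w r) (hlam : 0 < lam) :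
    ∃ v : ℝ → ℝ, Continuous v ∧ (∀ r, 1 ≤ v r) ∧
      ∀ r, a ≤ r → v r = 1 + volterra w lam a v r := by
  set E : ℝ → ℝ := fun r => exp (volterra w lam a (fun _ => 1) (max a r)) with hE
  have hEc : Continuous E := continuous_exp.comp
    ((continuous_volterra hw hw0 continuous_const).comp (continuous_const.max continuous_id))
  have hbdd : ∀ r, BddAbove (range fun k => picard w lam a k r) := fun r =>
    ⟨E r, by rintro _ ⟨k, rfl⟩; exact picard_le_exp hw hw0 hlam k r⟩
  set v : ℝ → ℝ := fun r => ⨆ k, picard w lam a k r with hv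
  have hlim : ∀ r, Tendsto (fun k => picard w lam a k r) atTop (nhds (v r)) := fun r =>
    tendsto_atTop_ciSup (monotone_nat_of_le_succ fun k => picard_le_succ hw hw0 hlam k r) (hbdd r)
  have hv1 : ∀ r, 1 ≤ v r := fun r => ge_of_tendsto' (hlim r) fun k => one_le_picard hw hw0 hlam k r
  have hvE : ∀ r, v r ≤ E r := fun r =>
    le_of_tendsto' (hlim r) fun k => picard_le_exp hw hw0 hlam k r
  have hvm : Measurable v := measurable_of_tendsto_metrizable
    (fun k => (continuous_picard hw hw0 k).measurable) (tendsto_pi_nhds.2 hlim)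
  have hwv : ∀ x y, IntervalIntegrable (fun t => w t * v t) volume x y := fun x y =>
    ((hw.mul hEc).intervalIntegrable x y).mono_fun (hw.measurable.mul hvm).aestronglyMeasurable
      (Eventually.of_forall fun t => by
        have h1 := hv1 t
        have h2 := hvE t
        have h3 := hw0 t
        simp only [Pi.mul_apply, norm_mul, Real.norm_eq_abs]
        rw [abs_of_pos h3, abs_of_pos (by linarith : 0 < v t), abs_of_pos (by linarith : 0 < E t)]
        gcongr)
  have hinner : ∀ s, Tendsto (fun k => ∫ t in a..s, w t * picard w lam a k t) atTop
      (nhds (∫ t in a..s, w t * v t)) := fun s => by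
    refine intervalIntegral.tendsto_integral_filter_of_dominated_convergence
      (fun t => w t * E t) (Eventually.of_forall fun k =>
        (hw.mul (continuous_picard hw hw0 k)).aestronglyMeasurable)
      (Eventually.of_forall fun k => Eventually.of_forall fun t _ => ?_)
      ((hw.mul hEc).intervalIntegrable _ _)
      (Eventually.of_forall fun t _ => (hlim t).const_mul _)
    have h1 := one_le_picard (a := a) hw hw0 hlam k t
    have h2 : _ ≤ E t := picard_le_exp hw hw0 hlam k t
    have h3 := hw0 t
    rw [norm_mul, Real.norm_eq_abs, Real.norm_eq_abs, abs_of_pos h3, abs_of_pos (by linarith)]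
    gcongr
  have houter : ∀ r, a ≤ r → Tendsto (fun k => volterra w lam a (picard w lam a k) r) atTop
      (nhds (volterra w lam a v r)) := fun r hr => by
    refine intervalIntegral.tendsto_integral_filter_of_dominated_convergence
      (fun s => (lam * ∫ t in a..s, w t * E t) / w s) (Eventually.of_forall fun k =>
        (continuous_flux hw hw0 (continuous_picard hw hw0 k)).aestronglyMeasurable)
      (Eventually.of_forall fun k => Eventually.of_forall fun s hs => ?_)
      ((continuous_flux hw hw0 hEc).intervalIntegrable _ _)
      (Eventually.of_forall fun s _ => ((hinner s).const_mul _).div_const _)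
    rw [uIoc_of_le hr] at hs
    have h3 := hw0 s
    have h4 : 0 ≤ ∫ t in a..s, w t * picard w lam a k t :=
      intervalIntegral.integral_nonneg hs.1.le fun t _ => mul_nonneg (hw0 t).le
        (zero_le_one.trans (one_le_picard hw hw0 hlam k t))
    rw [Real.norm_of_nonneg (by positivity)]
    have h5 : ∫ t in a..s, w t * picard w lam a k t ≤ ∫ t in a..s, w t * E t :=
      intervalIntegral.integral_mono_on hs.1.le
        ((hw.mul (continuous_picard hw hw0 k)).intervalIntegrable _ _)
        ((hw.mul hEc).intervalIntegrable _ _) fun t _ =>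
          mul_le_mul_of_nonneg_left (picard_le_exp hw hw0 hlam k t) (hw0 t).le
    gcongr
  have hfix : ∀ r, v r = 1 + volterra w lam a v (max a r) := fun r =>
    tendsto_nhds_unique ((tendsto_add_atTop_iff_nat 1).2 (hlim r))
      ((houter _ (le_max_left a r)).const_add 1)
  refine ⟨v, ?_, hv1, fun r hr => by simpa [max_eq_right hr] using hfix r⟩
  -- `v` is locally bounded and measurable, so `1 + T v` is continuous.
  have hflux : Continuous fun s => (lam * ∫ t in a..s, w t * v t) / w s :=
    (continuous_const.mul (intervalIntegral.continuous_primitive hwv a)).div hw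
      fun r => (hw0 r).ne'
  have hT : Continuous (volterra w lam a v) := continuous_iff_continuousAt.2 fun r =>
    (hflux.integral_hasStrictDerivAt a r).hasDerivAt.continuousAt
  rw [funext hfix]
  exact continuous_const.add (hT.comp (continuous_const.max continuous_id))

end Volterra

/-! ### Reduction of order -/

/-- The decreasing solution, obtained by reduction of order from the increasing one:
`B = u ∫_r^∞ 1/(w u²)`, normalised by `B a = 1`. The function `Q` is the flux `w B'`. The last
clause is the decay in the case of integrable `1/w`. -/
theorem exists_decreasing_solution {w : ℝ → ℝ} {lam a : ℝ} (hw : Continuous w)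
    (hw0 : ∀ r, 0 < w r) (hlam : 0 < lam) :
    ∃ B Q : ℝ → ℝ, (∀ r, a ≤ r → HasDerivAt B (Q r / w r) r) ∧
      (∀ r, a ≤ r → HasDerivAt Q (lam * (w r * B r)) r) ∧ B a = 1 ∧
      (∀ r, a ≤ r → 0 < B r) ∧ (∀ r, a ≤ r → Q r ≤ 0) ∧
      (IntegrableOn (fun r => 1 / w r) (Ioi a) → Tendsto B atTop (nhds 0)) := by
  obtain ⟨v, hvc, hv1, hfix⟩ := exists_volterra_fixed (a := a) hw hw0 hlam
  -- `u` is differentiable across `a`, while `v` is positive on the whole line;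
  -- they agree on `[a, ∞)`.
  set u : ℝ → ℝ := fun r => 1 + volterra w lam a v r with hu
  set q : ℝ → ℝ := fun r => lam * ∫ t in a..r, w t * v t with hq
  have huv : ∀ r, a ≤ r → u r = v r := fun r hr => (hfix r hr).symm
  have hu1 : ∀ r, a ≤ r → 1 ≤ u r := fun r hr => (huv r hr).symm ▸ hv1 r
  have hud : ∀ r, HasDerivAt u (q r / w r) r := fun r =>
    (hasDerivAt_volterra hw hw0 hvc r).const_add 1
  have hqd : ∀ r, HasDerivAt q (lam * (w r * v r)) r := fun r =>
    ((hw.mul hvc).integral_hasStrictDerivAt a r).hasDerivAt.const_mul lam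
  have hqa : q a = 0 := by simp [hq]
  have hua : u a = 1 := by simp [hu, volterra_self]
  have hqmono : Monotone q := monotone_of_hasDerivAt_nonneg hqd fun r => by
    have := hw0 r
    have := hv1 r
    change 0 ≤ lam * (w r * v r)
    positivity
  have hq0 : ∀ r, a ≤ r → 0 ≤ q r := fun r hr => hqa ▸ hqmono hr
  have hqpos : ∀ r, a < r → 0 < q r := fun r hr =>
    mul_pos hlam (intervalIntegral.intervalIntegral_pos_of_pos
      ((hw.mul hvc).intervalIntegrable _ _)
      (fun t => mul_pos (hw0 t) (zero_lt_one.trans_le (hv1 t))) hr)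
  have humono : AntitoneOn (fun r => - u r) (Ici a) :=
    antitoneOn_Ici_of_hasDerivAt (fun x _ => (hud x).neg) fun x hx => by
      have := hq0 x hx
      have := hw0 x
      rw [neg_nonpos]; positivity
  set f : ℝ → ℝ := fun r => 1 / (w r * v r ^ 2) with hf
  have hf0 : ∀ r, 0 < f r := fun r => by
    have := hw0 r
    have := hv1 r
    change 0 < 1 / (w r * v r ^ 2)
    positivity
  have hfc : Continuous f := continuous_const.div (hw.mul (hvc.pow 2)) fun r => by
    have := hw0 r
    have := hv1 r
    positivity
  set P : ℝ → ℝ := fun r => ∫ t in a..r, f t with hP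
  have hPd : ∀ r, HasDerivAt P (f r) r := fun r => (hfc.integral_hasStrictDerivAt a r).hasDerivAt
  have hPa : P a = 0 := by simp [hP]
  have hPmono : StrictMono P := strictMono_of_hasDerivAt_pos hPd hf0
  -- The tail estimate `∫_r^s 1/(w u²) ≤ 1/(q(r) u(r))`, from the monotonicity of `q = w u'`.
  have htail : ∀ r, a < r → ∀ s, r ≤ s → P s - P r ≤ 1 / (q r * u r) := fun r hr s hs => by
    have hqr := hqpos r hr
    have hanti : AntitoneOn (fun x => P x + (u x)⁻¹ / q r) (Ici r) := by
      refine antitoneOn_Ici_of_hasDerivAt (fun x hx => (hPd x).add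
        (((hud x).inv (zero_lt_one.trans_le (hu1 x (hr.le.trans hx))).ne').div_const _))
        fun x hx => ?_
      have hax := hr.le.trans hx
      have h1 := hu1 x hax
      have h2 := hw0 x
      have h3 : q r ≤ q x := hqmono hx
      have : f x + -(q x / w x) / u x ^ 2 / q r = (q r - q x) / (w x * u x ^ 2 * q r) := by
        simp only [hf, ← huv x hax]
        field_simp
        ring
      rw [this]
      exact div_nonpos_of_nonpos_of_nonneg (by linarith) (by positivity)
    have h := hanti self_mem_Ici hs hs
    have h1 := hu1 r hr.le
    have h2 := hu1 s (hr.le.trans hs)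
    have h3 : 0 ≤ (u s)⁻¹ / q r := by positivity
    have h4 : (u r)⁻¹ / q r = 1 / (q r * u r) := by field_simp
    simp only at h
    linarith
  have hPbdd : BddAbove (range P) := by
    refine ⟨P (a + 1) + 1 / (q (a + 1) * u (a + 1)), ?_⟩
    rintro _ ⟨s, rfl⟩
    have h1 := htail (a + 1) (by linarith) (max s (a + 1)) (le_max_right _ _)
    have h2 := hPmono.monotone (le_max_left s (a + 1))
    linarith
  set I : ℝ := ⨆ s, P s with hI
  have hPlim : Tendsto P atTop (nhds I) := tendsto_atTop_ciSup hPmono.monotone hPbdd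
  have hPI : ∀ r, P r < I := fun r =>
    (hPmono (lt_add_one r)).trans_le (le_ciSup hPbdd (r + 1))
  have hI0 : 0 < I := hPa ▸ hPI a
  have hqu : ∀ r, a ≤ r → q r * (I - P r) ≤ 1 / u r := fun r hr => by
    have h1 := hu1 r hr
    rcases hr.eq_or_lt with rfl | hr'
    · rw [hqa, zero_mul]; positivity
    · have h2 : I - P r ≤ 1 / (q r * u r) :=
        le_of_tendsto (hPlim.sub_const _) ((eventually_ge_atTop r).mono fun s hs => htail r hr' s hs)
      have h3 := hqpos r hr'
      calc q r * (I - P r) ≤ q r * (1 / (q r * u r)) := by gcongr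
        _ = 1 / u r := by field_simp
  have hBpos : ∀ r, a ≤ r → 0 < u r * (I - P r) / I := fun r hr => by
    have h1 := hu1 r hr
    have h2 := sub_pos.2 (hPI r)
    positivity
  refine ⟨fun r => u r * (I - P r) / I, fun r => (q r * (I - P r) - (u r)⁻¹) / I,
    fun r hr => ?_, fun r hr => ?_, ?_, hBpos, fun r hr => ?_, fun hint => ?_⟩
  · have h1 := hu1 r hr
    have h2 := hw0 r
    refine (((hud r).mul ((hPd r).const_sub I)).div_const I).congr_deriv ?_
    have hfr : f r = 1 / (w r * u r ^ 2) := by rw [huv r hr]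
    rw [hfr]
    beta_reduce
    field_simp
    ring
  · have h1 := hu1 r hr
    have h2 := hw0 r
    refine ((((hqd r).mul ((hPd r).const_sub I)).sub
      ((hud r).inv (zero_lt_one.trans_le h1).ne')).div_const I).congr_deriv ?_
    have hfr : f r = 1 / (w r * u r ^ 2) := by rw [huv r hr]
    rw [hfr, ← huv r hr]
    beta_reduce
    field_simp
    ring
  · simp [hua, hPa, hI0.ne']
  · have := hqu r hr
    rw [one_div] at this
    exact div_nonpos_of_nonpos_of_nonneg (by linarith) hI0.le
  · -- `u(r) ∫_r^s 1/(w u²) ≤ ∫_r^s 1/w`, since `u` is increasing and at least `1`.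
    have hwc : Continuous fun r => 1 / w r := continuous_const.div hw fun r => (hw0 r).ne'
    set H : ℝ → ℝ := fun r => ∫ t in a..r, 1 / w t with hH
    have hHd : ∀ r, HasDerivAt H (1 / w r) r := fun r =>
      (hwc.integral_hasStrictDerivAt a r).hasDerivAt
    have hHlim := intervalIntegral_tendsto_integral_Ioi a hint tendsto_id
    set J := ∫ t in Ioi a, 1 / w t with hJ
    change Tendsto H atTop (nhds J) at hHlim
    have hle : ∀ r, a ≤ r → u r * (I - P r) ≤ J - H r := fun r hr => by
      have hanti : AntitoneOn (fun s => u r * P s - H s) (Ici r) := by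
        refine antitoneOn_Ici_of_hasDerivAt (fun x _ => ((hPd x).const_mul (u r)).sub (hHd x))
          fun x hx => ?_
        have h1 := hu1 r hr
        have h2 := hw0 x
        have h3 : u r ≤ u x := by simpa using humono hr (hr.trans hx) hx
        have h4 : 0 < u x := by linarith
        simp only [hf, ← huv x (hr.trans hx)]
        rw [sub_nonpos, mul_one_div, div_le_div_iff₀ (by positivity) h2]
        have : u r ≤ u x ^ 2 := by nlinarith
        nlinarith
      have h1 : u r * I - J ≤ u r * P r - H r :=
        le_of_tendsto ((hPlim.const_mul (u r)).sub hHlim)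
          ((eventually_ge_atTop r).mono fun s hs => hanti self_mem_Ici hs hs)
      linarith
    have hz : Tendsto (fun r => (J - H r) / I) atTop (nhds 0) := by
      simpa using (hHlim.const_sub J).div_const I
    refine tendsto_of_tendsto_of_tendsto_of_le_of_le' tendsto_const_nhds hz ?_ ?_
    · filter_upwards [eventually_ge_atTop a] with r hr using (hBpos r hr).le
    · filter_upwards [eventually_ge_atTop a] with r hr
      exact div_le_div_of_nonneg_right (hle r hr) hI0.le

/-! ### Decay at infinity -/

/-- A continuous nonnegative function with bounded primitive is integrable at infinity. -/
theorem integrableOn_Ici_of_primitive_le {f : ℝ → ℝ} {a C : ℝ} (hf : Continuous f)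
    (hf0 : ∀ r, a ≤ r → 0 ≤ f r) (hC : ∀ r, a ≤ r → ∫ t in a..r, f t ≤ C) :
    IntegrableOn f (Ici a) := by
  rw [integrableOn_Ici_iff_integrableOn_Ioi]
  refine integrableOn_Ioi_of_intervalIntegral_norm_bounded C a
    (fun r : ℝ => (hf.integrableOn_Icc (a := a) (b := r)).mono_set Ioc_subset_Icc_self) tendsto_id
    ((eventually_ge_atTop a).mono fun r hr => ?_)
  refine le_trans (le_of_eq ?_) (hC r hr)
  refine intervalIntegral.integral_congr fun t ht => ?_
  rw [uIcc_of_le hr] at ht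
  exact Real.norm_of_nonneg (hf0 t ht.1)

/-- If the decreasing solution stays above `L > 0`, then integrating `Q' = λ w B ≥ λ L w` and then
`-B' = -Q / w ≥ λ L w⁻¹ ∫_r^∞ w` shows that both integrals in the Feller condition converge. -/
theorem integrable_of_lower_bound {w B Q : ℝ → ℝ} {lam a L : ℝ} (hw : Continuous w)
    (hw0 : ∀ r, 0 < w r) (hlam : 0 < lam) (hL : 0 < L)
    (hBd : ∀ r, a ≤ r → HasDerivAt B (Q r / w r) r)
    (hQd : ∀ r, a ≤ r → HasDerivAt Q (lam * (w r * B r)) r)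
    (hQ : ∀ r, a ≤ r → Q r ≤ 0) (hLB : ∀ r, a ≤ r → L ≤ B r) :
    IntegrableOn w (Ici a) ∧ IntegrableOn (fun r => (∫ t in Ioi r, w t) / w r) (Ici a) := by
  have hc : 0 < lam * L := mul_pos hlam hL
  have hWd : ∀ r, HasDerivAt (fun s => ∫ t in a..s, w t) (w r) r := fun r =>
    (hw.integral_hasStrictDerivAt a r).hasDerivAt
  have hanti : AntitoneOn (fun s => lam * L * (∫ t in a..s, w t) - Q s) (Ici a) :=
    antitoneOn_Ici_of_hasDerivAt (fun x hx => ((hWd x).const_mul _).sub (hQd x hx)) fun x hx => by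
      have h1 := mul_le_mul_of_nonneg_left (hLB x hx) (mul_pos hlam (hw0 x)).le
      linarith
  have hwint : IntegrableOn w (Ici a) := by
    refine integrableOn_Ici_of_primitive_le (C := -Q a / (lam * L)) hw (fun r _ => (hw0 r).le)
      fun r hr => ?_
    have h := hanti self_mem_Ici hr hr
    simp only [intervalIntegral.integral_same] at h
    rw [le_div_iff₀ hc]
    linarith [hQ r hr]
  refine ⟨hwint, ?_⟩
  have hwint' : IntegrableOn w (Ioi a) := hwint.mono_set Ioi_subset_Ici_self
  have hlim := intervalIntegral_tendsto_integral_Ioi a hwint' tendsto_id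
  set J := ∫ t in Ioi a, w t with hJ
  have hW : ∀ r, a ≤ r → ∫ t in Ioi r, w t = J - ∫ t in a..r, w t := fun r hr => by
    have := intervalIntegral.integral_interval_add_Ioi hwint' (hwint'.mono_set (Ioi_subset_Ioi hr))
    linarith
  have hWQ : ∀ r, a ≤ r → lam * L * (J - ∫ t in a..r, w t) ≤ - Q r := fun r hr => by
    have : lam * L * J ≤ lam * L * (∫ t in a..r, w t) - Q r :=
      le_of_tendsto (hlim.const_mul _) ((eventually_ge_atTop r).mono fun s hs => by
        have h := hanti hr (hr.trans hs) hs
        simp only [id] at h ⊢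
        linarith [hQ s (hr.trans hs)])
    linarith
  have hW0 : ∀ r, a ≤ r → 0 ≤ J - ∫ t in a..r, w t := fun r hr => by
    rw [← hW r hr]
    exact integral_nonneg fun t => (hw0 t).le
  have hFc : Continuous fun r => (J - ∫ t in a..r, w t) / w r :=
    (continuous_const.sub (intervalIntegral.continuous_primitive
      (fun x y => hw.intervalIntegrable x y) a)).div hw fun r => (hw0 r).ne'
  have hFint : IntegrableOn (fun r => (J - ∫ t in a..r, w t) / w r) (Ici a) := by
    refine integrableOn_Ici_of_primitive_le (C := B a / (lam * L)) hFc
      (fun r hr => div_nonneg (hW0 r hr) (hw0 r).le) fun r hr => ?_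
    have hanti2 : AntitoneOn
        (fun s => lam * L * (∫ x in a..s, (J - ∫ t in a..x, w t) / w x) + B s) (Ici a) := by
      refine antitoneOn_Ici_of_hasDerivAt (fun x hx =>
        ((hFc.integral_hasStrictDerivAt a x).hasDerivAt.const_mul _).add (hBd x hx)) fun x hx => ?_
      rw [← mul_div_assoc, ← add_div]
      exact div_nonpos_of_nonpos_of_nonneg (by linarith [hWQ x hx]) (hw0 x).le
    have h := hanti2 self_mem_Ici hr hr
    simp only [intervalIntegral.integral_same] at h
    rw [le_div_iff₀ hc]
    linarith [hLB r hr]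
  exact hFint.congr_fun (fun r hr => by simp only [hW r hr]) measurableSet_Ici

/-- existence of the minimal decaying solution of the radial
eigenvalue ODE `β'' + (n-1)(g'/g) β' = λ β` on `[R₀,∞)` under the Feller-type
integral conditions on `g`. -/
theorem stmt10
    (n : ℝ) (hn : 1 < n)
    (R₀ : ℝ) (hR₀ : 0 ≤ R₀)
    (lam : ℝ) (hlam : 0 < lam)
    (g g' : ℝ → ℝ)
    (hg_deriv : ∀ r : ℝ, R₀ ≤ r → HasDerivWithinAt g (g' r) (Set.Ici R₀) r)
    (hg'_cont : ContinuousOn g' (Set.Ici R₀))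
    (hg_pos : ∀ r : ℝ, R₀ ≤ r → 0 < g r)
    (hcond :
      MeasureTheory.IntegrableOn (fun r : ℝ => g r ^ (1 - n)) (Set.Ici R₀) ∨
      (¬ MeasureTheory.IntegrableOn (fun r : ℝ => g r ^ (1 - n)) (Set.Ici R₀) ∧
        (¬ MeasureTheory.IntegrableOn (fun r : ℝ => g r ^ (n - 1)) (Set.Ici R₀) ∨
          ¬ MeasureTheory.IntegrableOn
              (fun r : ℝ => (∫ t in Set.Ioi r, g t ^ (n - 1)) / g r ^ (n - 1))
              (Set.Ici R₀)))) :
    ∃ β β' β'' : ℝ → ℝ,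
      (∀ r : ℝ, R₀ ≤ r → HasDerivWithinAt β (β' r) (Set.Ici R₀) r) ∧
      (∀ r : ℝ, R₀ ≤ r → HasDerivWithinAt β' (β'' r) (Set.Ici R₀) r) ∧
      ContinuousOn β'' (Set.Ici R₀) ∧
      (∀ r : ℝ, R₀ ≤ r → β'' r + (n - 1) * (g' r / g r) * β' r = lam * β r) ∧
      β R₀ = 1 ∧
      (∀ r : ℝ, R₀ ≤ r → 0 < β r ∧ β r ≤ 1 ∧ β' r ≤ 0) ∧
      Filter.Tendsto β Filter.atTop (nhds 0) := by
  have hgc : ContinuousOn g (Ici R₀) := fun r hr => (hg_deriv r hr).continuousWithinAt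
  -- The weight `g ^ (n - 1)`, extended by a constant to the left of `R₀`.
  set w : ℝ → ℝ := fun r => g (max R₀ r) ^ (n - 1) with hw
  have hwg : ∀ r, R₀ ≤ r → w r = g r ^ (n - 1) := fun r hr => by simp [hw, max_eq_right hr]
  have hw0 : ∀ r, 0 < w r := fun r => rpow_pos_of_pos (hg_pos _ (le_max_left _ _)) _
  have hwc : Continuous w :=
    (hgc.comp_continuous (continuous_const.max continuous_id)
      fun r => mem_Ici.2 (le_max_left _ _)).rpow_const
      fun r => Or.inl (hg_pos _ (le_max_left _ _)).ne'
  obtain ⟨B, Q, hBd, hQd, hBa, hB0, hQ0, hBint⟩ :=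
    exists_decreasing_solution (a := R₀) hwc hw0 hlam
  have hBc : ContinuousOn B (Ici R₀) := fun r hr => (hBd r hr).continuousAt.continuousWithinAt
  have hQc : ContinuousOn Q (Ici R₀) := fun r hr => (hQd r hr).continuousAt.continuousWithinAt
  have hQw : ∀ r, R₀ ≤ r → Q r / w r ≤ 0 := fun r hr =>
    div_nonpos_of_nonpos_of_nonneg (hQ0 r hr) (hw0 r).le
  have hBanti : AntitoneOn B (Ici R₀) := antitoneOn_Ici_of_hasDerivAt hBd hQw
  refine ⟨B, fun r => Q r / w r, fun r => lam * B r - (n - 1) * (g' r / g r) * (Q r / w r),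
    fun r hr => (hBd r hr).hasDerivWithinAt, fun r hr => ?_, ?_, fun r _ => by ring, hBa,
    fun r hr => ⟨hB0 r hr, hBa ▸ hBanti self_mem_Ici hr hr, hQw r hr⟩, ?_⟩
  · have hg0 := hg_pos r hr
    have hwd : HasDerivWithinAt w (g' r * (n - 1) * g r ^ (n - 1 - 1)) (Ici R₀) r :=
      ((hg_deriv r hr).rpow_const (Or.inl hg0.ne')).congr hwg (hwg r hr)
    refine ((hQd r hr).hasDerivWithinAt.div hwd (hw0 r).ne').congr_deriv ?_
    have hpow : g r ^ (n - 1 - 1) = w r / g r := by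
      rw [rpow_sub_one hg0.ne', hwg r hr]
    rw [hpow]
    have := hw0 r
    field_simp
  · have hgg := hg'_cont.div hgc fun r hr => (hg_pos r hr).ne'
    exact (continuousOn_const.mul hBc).sub
      ((continuousOn_const.mul hgg).mul (hQc.div hwc.continuousOn fun r _ => (hw0 r).ne'))
  · rcases hcond with h | ⟨-, h⟩
    · refine hBint (IntegrableOn.congr_fun (h.mono_set Ioi_subset_Ici_self) (fun r hr => ?_)
        measurableSet_Ioi)
      have hr' : R₀ ≤ r := le_of_lt hr
      simp only [hwg r hr']
      rw [one_div, ← rpow_neg (hg_pos r hr').le, neg_sub]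
    · -- The limit of `B` exists by monotonicity; it vanishes since otherwise `B` would be
      -- bounded below by a positive constant.
      have hBanti' : Antitone fun r => B (max R₀ r) := fun x y hxy =>
        hBanti (mem_Ici.2 (le_max_left _ _)) (mem_Ici.2 (le_max_left _ _)) (max_le_max le_rfl hxy)
      have hbdd : BddBelow (range fun r => B (max R₀ r)) :=
        ⟨0, by rintro _ ⟨r, rfl⟩; exact (hB0 _ (le_max_left _ _)).le⟩
      have hlim := tendsto_atTop_ciInf hBanti' hbdd
      set L := ⨅ r, B (max R₀ r) with hLdef
      have hLB : ∀ r, R₀ ≤ r → L ≤ B r := fun r hr => by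
        simpa [max_eq_right hr] using ciInf_le hbdd r
      have hL0 : 0 ≤ L := le_ciInf fun r => (hB0 _ (le_max_left _ _)).le
      have hlimB : Tendsto B atTop (nhds L) := hlim.congr' <| by
        filter_upwards [eventually_ge_atTop R₀] with r hr
        rw [max_eq_right hr]
      rcases hL0.eq_or_lt with hL | hL
      · rwa [← hL] at hlimB
      · exfalso
        obtain ⟨h1, h2⟩ := integrable_of_lower_bound hwc hw0 hlam hL hBd hQd hQ0 hLB
        rcases h with h | h
        · exact h (h1.congr_fun (fun r hr => hwg r hr) measurableSet_Ici)
        · refine h (h2.congr_fun (fun r hr => ?_) measurableSet_Ici)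
          simp only [hwg r hr]
          congr 1
          exact setIntegral_congr_fun measurableSet_Ioi fun t ht =>
            hwg t (le_trans hr (le_of_lt ht))
end
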